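/- Let Γ be a planar octilinear drawing of a simple graph G, and let c ∈ ℝ be such that no vertex point and no bend point of Γ has x-coordinate equal to c, and every segment of every polyline of Γ whose image intersects the vertical line x = c is horizontal (direction parallel to (1,0)). Let δ be a positive integer and define φ : points with x-coordinate less than c are fixed, and points with x-coordinate greater than c are translated by (δ,0). Then replacing every vertex point and every polyline point q_i of Γ by its image under φ yields again a planar octilinear drawing of G, in which every edge has the same number of bends as in Γ. -/

import Mathlib

/-!
The stretched drawing is compared with the original one through the collapse map `uncut`, which
fixes the half-plane left of `x = c`, squeezes the strip `c ≤ x ≤ c + δ` onto the line `x = c`, and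
translates the rest back by `(-δ, 0)`. It is a left inverse of `cutShift`, and `cutShift` recovers
every point whose collapse does not lie on the line `x = c` (`cutShift_uncut`).

A segment that stays on one side of the line is fixed or translated, while a segment that crosses
it is horizontal and gets longer. In either case `uncut` maps the new segment into the old one
(`exists_uncut_segment`), and a half-open segment containing its start point into the corresponding
half-open segment. Hence `uncut` maps the point of a stretched polyline at parameter `s` to a point
of the original polyline at a parameter with the same integer part (`exists_uncut_param`).

Planarity follows. A common point `z` of two stretched polylines, or of a stretched polyline and a
vertex, collapses to such a common point of the original drawing, hence to a vertex point; as no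
vertex point lies on the line, `z` is the shifted vertex point. If a stretched polyline takes the
same value at two parameters, simplicity of the original forces them to have the same integer part,
so they lie on one nondegenerate segment and are equal.

Octilinearity is clear segment by segment, and bends stay proper because the determinant of two
consecutive directions stays nonzero: a crossing segment is horizontal and keeps its orientation,
and two consecutive segments cannot both be horizontal.
-/

/-!
Common definitions: polylines, octilinear drawings, planarity, triconnectivity.
-/

/-- A polyline: a sequence of `len + 1` points `pt 0, pt 1, …, pt len`,
consisting of `len ≥ 1` segments. (Values of `pt` beyond `len` are irrelevant.) -/
structure Polyline where
  len : ℕ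
  len_pos : 1 ≤ len
  pt : ℕ → ℝ × ℝ

namespace Polyline

/-- The number of bends of a polyline (its interior points `pt 1, …, pt (len-1)`). -/
def bends (P : Polyline) : ℕ := P.len - 1

/-- Piecewise-linear parametrization of the polyline on the interval `[0, len]`. -/
noncomputable def param (P : Polyline) (s : ℝ) : ℝ × ℝ :=
  P.pt ⌊s⌋.toNat + (s - (⌊s⌋.toNat : ℝ)) • (P.pt (⌊s⌋.toNat + 1) - P.pt ⌊s⌋.toNat)

/-- The image (trace) of the polyline in the plane. -/
noncomputable def image (P : Polyline) : Set (ℝ × ℝ) :=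
  P.param '' Set.Icc 0 (P.len : ℝ)

/-- The polyline is a simple curve. -/
def Simple (P : Polyline) : Prop :=
  Set.InjOn P.param (Set.Icc 0 (P.len : ℝ))

/-- Every segment is nondegenerate, and no two consecutive segments are collinear. -/
def Proper (P : Polyline) : Prop :=
  (∀ i < P.len, P.pt i ≠ P.pt (i + 1)) ∧
  (∀ i, i + 1 < P.len → ¬ Collinear ℝ ({P.pt i, P.pt (i + 1), P.pt (i + 2)} : Set (ℝ × ℝ)))

/-- The segment from `a` to `b` is horizontal, vertical, or diagonal at `45°`. -/
def OctiSeg (a b : ℝ × ℝ) : Prop :=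
  b.2 - a.2 = 0 ∨ b.1 - a.1 = 0 ∨ b.2 - a.2 = b.1 - a.1 ∨ b.2 - a.2 = -(b.1 - a.1)

/-- The polyline is octilinear: proper, with all segments in octilinear directions. -/
def Octilinear (P : Polyline) : Prop :=
  P.Proper ∧ ∀ i < P.len, OctiSeg (P.pt i) (P.pt (i + 1))

end Polyline

/-- Embedding of the integer grid into the real plane. -/
def toR (p : ℤ × ℤ) : ℝ × ℝ := ((p.1 : ℝ), (p.2 : ℝ))

/-- A polyline drawing of a simple graph `G` in the plane:
an injective placement of the vertices and, for each edge, a polyline whose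
endpoints are the points of the edge's endvertices, with nondegenerate segments
and no two consecutive segments collinear. -/
structure PolyDrawing {V : Type*} (G : SimpleGraph V) where
  pos : V → ℝ × ℝ
  inj : Function.Injective pos
  poly : Sym2 V → Polyline
  ends : ∀ u v, G.Adj u v →
    ({(poly s(u, v)).pt 0, (poly s(u, v)).pt (poly s(u, v)).len} : Set (ℝ × ℝ)) =
      {pos u, pos v}
  proper : ∀ e ∈ G.edgeSet, (poly e).Proper

/-- A polyline drawing is planar: every edge-polyline is a simple curve meeting the
vertex points exactly in its two endpoints, and polylines of distinct edges intersect
only in images of common endvertices. -/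
def PolyDrawing.IsPlanar {V : Type*} {G : SimpleGraph V} (D : PolyDrawing G) : Prop :=
  (∀ e ∈ G.edgeSet, (D.poly e).Simple) ∧
  (∀ u v, G.Adj u v →
    (D.poly s(u, v)).image ∩ Set.range D.pos = {D.pos u, D.pos v}) ∧
  (∀ e ∈ G.edgeSet, ∀ e' ∈ G.edgeSet, e ≠ e' →
    (D.poly e).image ∩ (D.poly e').image ⊆ D.pos '' {w | w ∈ e ∧ w ∈ e'})

/-- A simple graph is planar if it admits a planar polyline drawing in `ℝ²`. -/
def GraphPlanar {V : Type*} (G : SimpleGraph V) : Prop :=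
  ∃ D : PolyDrawing G, D.IsPlanar

/-- An octilinear drawing of a simple graph `G`: vertices are placed injectively on the
integer grid and each edge is drawn as an octilinear polyline between its endvertices. -/
structure OctiDrawing {V : Type*} (G : SimpleGraph V) where
  pos : V → ℤ × ℤ
  inj : Function.Injective pos
  poly : Sym2 V → Polyline
  ends : ∀ u v, G.Adj u v →
    ({(poly s(u, v)).pt 0, (poly s(u, v)).pt (poly s(u, v)).len} : Set (ℝ × ℝ)) =
      {toR (pos u), toR (pos v)}
  octi : ∀ e ∈ G.edgeSet, (poly e).Octilinear

/-- An octilinear drawing is planar: every edge-polyline is a simple curve meeting the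
vertex points exactly in its two endpoints, and polylines of distinct edges intersect
only in images of common endvertices. -/
def OctiDrawing.IsPlanar {V : Type*} {G : SimpleGraph V} (D : OctiDrawing G) : Prop :=
  (∀ e ∈ G.edgeSet, (D.poly e).Simple) ∧
  (∀ u v, G.Adj u v →
    (D.poly s(u, v)).image ∩ Set.range (fun w => toR (D.pos w)) =
      {toR (D.pos u), toR (D.pos v)}) ∧
  (∀ e ∈ G.edgeSet, ∀ e' ∈ G.edgeSet, e ≠ e' →
    (D.poly e).image ∩ (D.poly e').image ⊆
      (fun w => toR (D.pos w)) '' {w | w ∈ e ∧ w ∈ e'})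

/-- The total number of bends of an octilinear drawing. -/
noncomputable def OctiDrawing.totalBends {V : Type*} [Fintype V] {G : SimpleGraph V}
    (D : OctiDrawing G) : ℕ :=
  ∑ e ∈ G.edgeSet.toFinite.toFinset, (D.poly e).bends

/-- The union of the images of the polylines of a set `S` of edges. -/
noncomputable def edgesImage {V : Type*} {G : SimpleGraph V} (D : OctiDrawing G)
    (S : Set (Sym2 V)) : Set (ℝ × ℝ) :=
  ⋃ e ∈ S, (D.poly e).image

/-- The interior (in the drawing `D`) of the closed curve formed by the edges in `S`:
the union of the bounded connected components of the complement of the curve. -/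
noncomputable def interiorOf {V : Type*} {G : SimpleGraph V} (D : OctiDrawing G)
    (S : Set (Sym2 V)) : Set (ℝ × ℝ) :=
  {z | z ∉ edgesImage D S ∧ Bornology.IsBounded (connectedComponentIn (edgesImage D S)ᶜ z)}

/-- A graph is triconnected if it has at least `4` vertices and deleting
any at most `2` vertices leaves it connected. -/
def Triconnected {V : Type*} [Fintype V] (G : SimpleGraph V) : Prop :=
  4 ≤ Fintype.card V ∧ ∀ S : Set V, S.ncard ≤ 2 → (G.induce Sᶜ).Connected

/-- The maximum degree of `G` is at most `k`. -/
def MaxDegLE {V : Type*} (G : SimpleGraph V) (k : ℕ) : Prop :=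
  ∀ v, (G.neighborSet v).ncard ≤ k

/-- The shift map of a vertical cut at `x = c` by `δ`: points with `x`-coordinate less
than `c` are fixed, all other points are translated by `(δ, 0)`. -/
noncomputable def cutShift (c : ℝ) (δ : ℕ) (z : ℝ × ℝ) : ℝ × ℝ :=
  if z.1 < c then z else (z.1 + δ, z.2)

/-! ### The shift and the collapse map -/

/-- The collapse map: it fixes points left of `x = c`, maps the strip `c ≤ x ≤ c + δ` horizontally
onto the line `x = c`, and translates points further right by `(-δ, 0)`. -/
noncomputable def uncut (c : ℝ) (δ : ℕ) (z : ℝ × ℝ) : ℝ × ℝ :=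
  if z.1 < c then z else if z.1 ≤ c + δ then (c, z.2) else (z.1 - δ, z.2)

lemma uncut_cutShift (c : ℝ) (δ : ℕ) (z : ℝ × ℝ) (hz : z.1 ≠ c) :
    uncut c δ (cutShift c δ z) = z := by
  have hd : (0 : ℝ) ≤ δ := Nat.cast_nonneg δ
  by_cases h : z.1 < c
  · simp [cutShift, uncut, h]
  · have h1 : c < z.1 := lt_of_le_of_ne (not_lt.mp h) hz.symm
    have h2 : ¬ z.1 + (δ : ℝ) < c := by linarith
    simp [cutShift, uncut, h, h2, h1]

lemma cutShift_uncut (c : ℝ) (δ : ℕ) (z : ℝ × ℝ) (hz : (uncut c δ z).1 ≠ c) :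
    cutShift c δ (uncut c δ z) = z := by
  unfold uncut at hz ⊢
  split_ifs at hz ⊢ with h1 h2
  · simp [cutShift, h1]
  · exact absurd rfl hz
  · have h3 : ¬ z.1 - (δ : ℝ) < c := by linarith
    simp [cutShift, h3]

lemma cutShift_injective (c : ℝ) (δ : ℕ) : Function.Injective (cutShift c δ) := by
  intro a b h
  have hd : (0 : ℝ) ≤ δ := Nat.cast_nonneg δ
  obtain ⟨a1, a2⟩ := a
  obtain ⟨b1, b2⟩ := b
  unfold cutShift at h
  split_ifs at h with h1 h2 h2 <;> simp only [Prod.mk.injEq] at h h1 h2 ⊢ <;>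
    refine ⟨?_, h.2⟩ <;> linarith [h.1]

/-! ### Segments -/

/-- A segment with endpoints strictly on opposite sides of `x = c` meets that line. -/
lemma exists_mem_segment_fst_eq {a b : ℝ × ℝ} {c : ℝ}
    (h : (a.1 < c ∧ c < b.1) ∨ (b.1 < c ∧ c < a.1)) : ∃ z ∈ segment ℝ a b, z.1 = c := by
  have hne : b.1 - a.1 ≠ 0 := by
    rcases h with h | h
    · exact (sub_pos.2 (h.1.trans h.2)).ne'
    · exact (sub_neg.2 (h.1.trans h.2)).ne
  refine ⟨a + ((c - a.1) / (b.1 - a.1)) • (b - a), ?_, ?_⟩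
  · rw [segment_eq_image']
    refine ⟨_, ⟨?_, ?_⟩, rfl⟩
    · rcases h with h | h
      · exact div_nonneg (by linarith) (by linarith)
      · exact div_nonneg_of_nonpos (by linarith) (by linarith)
    · rcases h with h | h
      · rw [div_le_one (by linarith)]; linarith
      · rw [div_le_one_of_neg (by linarith)]; linarith
  · simp only [Prod.fst_add, Prod.smul_fst, Prod.fst_sub, smul_eq_mul]
    field_simp
    ring

/-- The hypotheses on a segment at the vertical cut: its endpoints avoid the line, and it is
horizontal if they lie on opposite sides. -/
structure CutSeg (c : ℝ) (a b : ℝ × ℝ) : Prop where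
  left : a.1 ≠ c
  right : b.1 ≠ c
  horiz : (a.1 < c ∧ c < b.1) ∨ (b.1 < c ∧ c < a.1) → a.2 = b.2

/-- Both endpoints lie left of the line, or both right of it, or the segment crosses it. -/
lemma CutSeg.cases {c : ℝ} {a b : ℝ × ℝ} (h : CutSeg c a b) :
    (a.1 < c ∧ b.1 < c) ∨ (c < a.1 ∧ c < b.1) ∨ (a.1 < c ∧ c < b.1 ∧ a.2 = b.2) ∨
      (b.1 < c ∧ c < a.1 ∧ a.2 = b.2) := by
  have := h.horiz
  rcases lt_or_gt_of_ne h.left with h1 | h1 <;> rcases lt_or_gt_of_ne h.right with h2 | h2 <;> tauto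

lemma cutShift_of_lt {c : ℝ} (δ : ℕ) {z : ℝ × ℝ} (h : z.1 < c) : cutShift c δ z = z := by
  simp [cutShift, h]

lemma cutShift_of_gt {c : ℝ} (δ : ℕ) {z : ℝ × ℝ} (h : c < z.1) :
    cutShift c δ z = (z.1 + δ, z.2) := by
  simp [cutShift, h.le]

lemma octiSeg_cutShift {c : ℝ} {δ : ℕ} {a b : ℝ × ℝ} (h : CutSeg c a b)
    (ho : Polyline.OctiSeg a b) : Polyline.OctiSeg (cutShift c δ a) (cutShift c δ b) := by
  rcases h.cases with ⟨h1, h2⟩ | ⟨h1, h2⟩ | ⟨h1, h2, h3⟩ | ⟨h1, h2, h3⟩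
  · rwa [cutShift_of_lt δ h1, cutShift_of_lt δ h2]
  · rw [cutShift_of_gt δ h1, cutShift_of_gt δ h2]
    simpa [Polyline.OctiSeg] using ho
  · rw [cutShift_of_lt δ h1, cutShift_of_gt δ h2]
    left; simp [h3]
  · rw [cutShift_of_lt δ h1, cutShift_of_gt δ h2]
    left; simp [h3]

lemma det_eq_zero_of_collinear {p q r : ℝ × ℝ} (h : Collinear ℝ ({p, q, r} : Set (ℝ × ℝ))) :
    (q.1 - p.1) * (r.2 - q.2) - (q.2 - p.2) * (r.1 - q.1) = 0 := by
  obtain ⟨v, hv⟩ := (collinear_iff_of_mem (p₀ := p) (by simp)).1 h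
  obtain ⟨s, hs⟩ := hv q (by simp)
  obtain ⟨t, ht⟩ := hv r (by simp)
  simp only [vadd_eq_add] at hs ht
  subst hs
  subst ht
  simp only [Prod.fst_add, Prod.snd_add, Prod.smul_fst, Prod.smul_snd, smul_eq_mul]
  ring

lemma collinear_of_det_eq_zero {p q r : ℝ × ℝ} (hpq : p ≠ q)
    (h : (q.1 - p.1) * (r.2 - q.2) - (q.2 - p.2) * (r.1 - q.1) = 0) :
    Collinear ℝ ({p, q, r} : Set (ℝ × ℝ)) := by
  have key : ∃ t : ℝ, r = t • (q - p) + p := by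
    by_cases h1 : q.1 - p.1 = 0
    · have h2 : q.2 - p.2 ≠ 0 := by
        intro h2
        exact hpq (Prod.ext (by linarith) (by linarith))
      refine ⟨(r.2 - p.2) / (q.2 - p.2), Prod.ext ?_ ?_⟩
      · have h3 : r.1 - q.1 = 0 := by
          rw [h1] at h
          have : (q.2 - p.2) * (r.1 - q.1) = 0 := by linarith
          exact (mul_eq_zero.1 this).resolve_left h2
        simp only [Prod.fst_add, Prod.smul_fst, Prod.fst_sub, smul_eq_mul, h1]
        linarith
      · simp only [Prod.snd_add, Prod.smul_snd, Prod.snd_sub, smul_eq_mul]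
        field_simp
        ring
    · refine ⟨(r.1 - p.1) / (q.1 - p.1), Prod.ext ?_ ?_⟩
      · simp only [Prod.fst_add, Prod.smul_fst, Prod.fst_sub, smul_eq_mul]
        field_simp
        ring
      · simp only [Prod.snd_add, Prod.smul_snd, Prod.snd_sub, smul_eq_mul]
        field_simp
        linarith
  obtain ⟨t, ht⟩ := key
  rw [collinear_iff_of_mem (p₀ := p) (by simp)]
  refine ⟨q - p, ?_⟩
  intro x hx
  simp only [Set.mem_insert_iff, Set.mem_singleton_iff] at hx
  rcases hx with rfl | rfl | rfl
  · exact ⟨0, by simp⟩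
  · exact ⟨1, by simp⟩
  · exact ⟨t, by simpa using ht⟩

/-- Shifting scales the horizontal component of a direction by a positive factor and keeps the
vertical one; the factor is `1` unless the segment is horizontal. -/
lemma CutSeg.exists_scale {c : ℝ} {a b : ℝ × ℝ} (h : CutSeg c a b) (δ : ℕ) :
    ∃ k : ℝ, 0 < k ∧ (cutShift c δ b).1 - (cutShift c δ a).1 = k * (b.1 - a.1) ∧
      (cutShift c δ b).2 - (cutShift c δ a).2 = b.2 - a.2 ∧ (k = 1 ∨ b.2 - a.2 = 0) := by
  have hd : (0 : ℝ) ≤ δ := Nat.cast_nonneg δ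
  rcases h.cases with ⟨h1, h2⟩ | ⟨h1, h2⟩ | ⟨h1, h2, h3⟩ | ⟨h1, h2, h3⟩
  · exact ⟨1, by simp [cutShift_of_lt δ h1, cutShift_of_lt δ h2]⟩
  · exact ⟨1, by simp [cutShift_of_gt δ h1, cutShift_of_gt δ h2]⟩
  · have h4 : 0 < b.1 - a.1 := by linarith
    refine ⟨(b.1 - a.1 + δ) / (b.1 - a.1), by positivity, ?_, ?_, Or.inr (by linarith)⟩
    · rw [cutShift_of_lt δ h1, cutShift_of_gt δ h2]; field_simp; ring
    · rw [cutShift_of_lt δ h1, cutShift_of_gt δ h2]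
  · have h4 : 0 < a.1 - b.1 := by linarith
    refine ⟨(a.1 - b.1 + δ) / (a.1 - b.1), by positivity, ?_, ?_, Or.inr (by linarith)⟩
    · rw [cutShift_of_lt δ h1, cutShift_of_gt δ h2]; field_simp; ring
    · rw [cutShift_of_lt δ h1, cutShift_of_gt δ h2]

lemma not_collinear_cutShift {c : ℝ} {δ : ℕ} {p q r : ℝ × ℝ} (h1 : CutSeg c p q)
    (h2 : CutSeg c q r) (hpq : p ≠ q) (h : ¬ Collinear ℝ ({p, q, r} : Set (ℝ × ℝ))) :
    ¬ Collinear ℝ ({cutShift c δ p, cutShift c δ q, cutShift c δ r} : Set (ℝ × ℝ)) := by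
  intro hc
  apply h
  apply collinear_of_det_eq_zero hpq
  have hdet := det_eq_zero_of_collinear hc
  obtain ⟨k, hk, e1, e2, e3⟩ := h1.exists_scale δ
  obtain ⟨l, hl, f1, f2, f3⟩ := h2.exists_scale δ
  rw [e1, e2, f1, f2] at hdet
  rcases e3 with rfl | e3
  · rcases f3 with rfl | f3
    · linarith
    · rw [f3] at hdet ⊢
      have : l * ((q.2 - p.2) * (r.1 - q.1)) = 0 := by linarith
      have := (mul_eq_zero.1 this).resolve_left hl.ne'
      linarith
  · rw [e3] at hdet ⊢
    have : k * ((q.1 - p.1) * (r.2 - q.2)) = 0 := by linarith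
    have := (mul_eq_zero.1 this).resolve_left hk.ne'
    linarith

/-- A horizontal segment contains every point whose height is right and whose abscissa `x` lies
between the end abscissas, the end point `b` excluded. -/
lemma exists_param_of_horizontal {a b : ℝ × ℝ} {x : ℝ} (hy : a.2 = b.2)
    (h : (a.1 ≤ x ∧ x < b.1) ∨ (b.1 < x ∧ x ≤ a.1)) :
    ∃ m : ℝ, 0 ≤ m ∧ m < 1 ∧ ((x, a.2) : ℝ × ℝ) = a + m • (b - a) := by
  have hne : b.1 - a.1 ≠ 0 := by
    rcases h with h | h
    · exact (sub_pos.2 (h.1.trans_lt h.2)).ne'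
    · exact (sub_neg.2 (h.1.trans_le h.2)).ne
  refine ⟨(x - a.1) / (b.1 - a.1), ?_, ?_, Prod.ext ?_ ?_⟩
  · rcases h with h | h
    · exact div_nonneg (by linarith) (by linarith)
    · exact div_nonneg_of_nonpos (by linarith) (by linarith)
  · rcases h with h | h
    · rw [div_lt_one (by linarith)]; linarith
    · rw [div_lt_one_of_neg (by linarith)]; linarith
  · simp only [Prod.fst_add, Prod.smul_fst, Prod.fst_sub, smul_eq_mul]
    field_simp
    ring
  · simp [hy]

/-- The collapse map sends the shifted half-open segment into the original half-open segment. -/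
lemma exists_uncut_segment {c : ℝ} {δ : ℕ} {a b : ℝ × ℝ} (h : CutSeg c a b) {l : ℝ}
    (hl0 : 0 ≤ l) (hl1 : l < 1) :
    ∃ m : ℝ, 0 ≤ m ∧ m < 1 ∧
      uncut c δ (cutShift c δ a + l • (cutShift c δ b - cutShift c δ a)) = a + m • (b - a) := by
  have hd : (0 : ℝ) ≤ δ := Nat.cast_nonneg δ
  rcases h.cases with ⟨h1, h2⟩ | ⟨h1, h2⟩ | ⟨h1, h2, h3⟩ | ⟨h1, h2, h3⟩
  · refine ⟨l, hl0, hl1, ?_⟩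
    rw [cutShift_of_lt δ h1, cutShift_of_lt δ h2]
    have : (a + l • (b - a)).1 < c := by
      simp only [Prod.fst_add, Prod.smul_fst, Prod.fst_sub, smul_eq_mul]
      nlinarith
    simp only [uncut, this, if_true]
  · refine ⟨l, hl0, hl1, ?_⟩
    have hx : c < (a + l • (b - a)).1 := by
      simp only [Prod.fst_add, Prod.smul_fst, Prod.fst_sub, smul_eq_mul]
      nlinarith
    have hsh : cutShift c δ a + l • (cutShift c δ b - cutShift c δ a)
        = cutShift c δ (a + l • (b - a)) := by
      rw [cutShift_of_gt δ h1, cutShift_of_gt δ h2, cutShift_of_gt δ hx]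
      ext <;> simp
      ring
    rw [hsh, uncut_cutShift _ _ _ hx.ne']
  · rw [cutShift_of_lt δ h1, cutShift_of_gt δ h2]
    obtain ⟨x, hx⟩ : ∃ x, x = a.1 + l * (b.1 + δ - a.1) := ⟨_, rfl⟩
    have hz : a + l • (((b.1 + δ, b.2) : ℝ × ℝ) - a) = (x, a.2) := by
      ext <;> simp [hx, h3]
    have hx1 : a.1 ≤ x := by nlinarith
    have hx2 : x < b.1 + δ := by nlinarith
    rw [hz]
    unfold uncut
    split_ifs with g1 g2
    · exact exists_param_of_horizontal h3 (Or.inl ⟨hx1, g1.trans h2⟩)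
    · exact exists_param_of_horizontal h3 (Or.inl ⟨h1.le, h2⟩)
    · exact exists_param_of_horizontal h3 (Or.inl ⟨by simp at g2; linarith, by simp; linarith⟩)
  · rw [cutShift_of_lt δ h1, cutShift_of_gt δ h2]
    obtain ⟨x, hx⟩ : ∃ x, x = a.1 + δ + l * (b.1 - (a.1 + δ)) := ⟨_, rfl⟩
    have hz : ((a.1 + δ, a.2) : ℝ × ℝ) + l • (b - ((a.1 + δ, a.2) : ℝ × ℝ)) = (x, a.2) := by
      ext <;> simp [hx, h3]
    have hx1 : x ≤ a.1 + δ := by nlinarith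
    have hx2 : b.1 < x := by nlinarith
    rw [hz]
    unfold uncut
    split_ifs with g1 g2
    · simp only at g1
      exact exists_param_of_horizontal h3 (Or.inr ⟨hx2, by linarith⟩)
    · exact exists_param_of_horizontal h3 (Or.inr ⟨h1, h2.le⟩)
    · exact exists_param_of_horizontal h3 (Or.inr ⟨by simp at g2; linarith, by simp; linarith⟩)

/-! ### Polylines -/

namespace Polyline

lemma floor_nat_add (i : ℕ) {l : ℝ} (h0 : 0 ≤ l) (h1 : l < 1) : ⌊(i : ℝ) + l⌋₊ = i := by
  rw [Nat.floor_eq_iff (by positivity)]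
  exact ⟨by linarith, by linarith⟩

lemma param_nat_add (P : Polyline) (i : ℕ) {l : ℝ} (h0 : 0 ≤ l) (h1 : l < 1) :
    P.param (i + l) = P.pt i + l • (P.pt (i + 1) - P.pt i) := by
  have h : ⌊(i : ℝ) + l⌋ = (i : ℤ) := by
    rw [Int.floor_eq_iff]
    push_cast
    exact ⟨by linarith, by linarith⟩
  simp [param, h]

lemma param_nat (P : Polyline) (i : ℕ) : P.param i = P.pt i := by
  simpa using P.param_nat_add i le_rfl one_pos

/-- A parameter in `[0, n]` is `n`, or `i + l` with `i < n` and `0 ≤ l < 1`. -/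
lemma param_cases {n : ℕ} {s : ℝ} (hs : s ∈ Set.Icc (0 : ℝ) n) :
    s = n ∨ ∃ i : ℕ, i < n ∧ ∃ l : ℝ, 0 ≤ l ∧ l < 1 ∧ s = i + l := by
  rcases hs.2.lt_or_eq with h | h
  · refine Or.inr ⟨⌊s⌋₊, (Nat.floor_lt hs.1).2 h, s - ⌊s⌋₊, ?_, ?_, by ring⟩
    · linarith [Nat.floor_le hs.1]
    · linarith [Nat.lt_floor_add_one s]
  · exact Or.inl h

/-- The polyline whose points are the shifted points of `P`. -/
noncomputable def shift (c : ℝ) (δ : ℕ) (P : Polyline) : Polyline where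
  len := P.len
  len_pos := P.len_pos
  pt i := cutShift c δ (P.pt i)

/-- The hypotheses on a polyline at the vertical cut, segment by segment. -/
def Cuttable (c : ℝ) (P : Polyline) : Prop :=
  ∀ i < P.len, CutSeg c (P.pt i) (P.pt (i + 1))

variable {c : ℝ} {δ : ℕ} {P : Polyline}

lemma octilinear_shift (hc : P.Cuttable c) (h : P.Octilinear) : (P.shift c δ).Octilinear := by
  obtain ⟨⟨h1, h2⟩, h3⟩ := h
  refine ⟨⟨fun i hi he => h1 i hi (cutShift_injective c δ he), fun i hi => ?_⟩, fun i hi => ?_⟩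
  · have hi' : i + 1 < P.len := hi
    exact not_collinear_cutShift (hc i (by omega)) (hc (i + 1) hi') (h1 i (by omega)) (h2 i hi')
  · exact octiSeg_cutShift (hc i hi) (h3 i hi)

lemma Cuttable.pt_len_ne (hc : P.Cuttable c) : (P.pt P.len).1 ≠ c := by
  have hpos := P.len_pos
  have := (hc (P.len - 1) (by omega)).right
  rwa [Nat.sub_add_cancel hpos] at this

/-- The collapse map sends the shifted polyline into the original one, and the parameters of a
point and of its collapse have the same integer part. -/
lemma exists_uncut_param (hc : P.Cuttable c) {s : ℝ} (hs : s ∈ Set.Icc (0 : ℝ) P.len) :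
    ∃ t ∈ Set.Icc (0 : ℝ) P.len, ⌊t⌋₊ = ⌊s⌋₊ ∧
      uncut c δ ((P.shift c δ).param s) = P.param t := by
  rcases param_cases hs with rfl | ⟨i, hi, l, hl0, hl1, rfl⟩
  · refine ⟨P.len, hs, rfl, ?_⟩
    rw [param_nat, param_nat]
    exact uncut_cutShift c δ _ hc.pt_len_ne
  · obtain ⟨m, hm0, hm1, hm⟩ := exists_uncut_segment (δ := δ) (hc i hi) hl0 hl1
    have hi' : (i : ℝ) + 1 ≤ P.len := by exact_mod_cast hi
    refine ⟨i + m, ⟨by positivity, by linarith⟩, ?_, ?_⟩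
    · rw [floor_nat_add i hm0 hm1, floor_nat_add i hl0 hl1]
    · rw [param_nat_add _ _ hl0 hl1, param_nat_add _ _ hm0 hm1]
      exact hm

lemma uncut_mem_image (hc : P.Cuttable c) {z : ℝ × ℝ} (hz : z ∈ (P.shift c δ).image) :
    uncut c δ z ∈ P.image := by
  obtain ⟨s, hs, rfl⟩ := hz
  obtain ⟨t, ht, -, h⟩ := exists_uncut_param (δ := δ) hc hs
  exact ⟨t, ht, h.symm⟩

lemma pt_zero_mem_image (P : Polyline) : P.pt 0 ∈ P.image :=
  ⟨0, ⟨le_rfl, Nat.cast_nonneg _⟩, by simpa using P.param_nat 0⟩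

lemma pt_len_mem_image (P : Polyline) : P.pt P.len ∈ P.image :=
  ⟨P.len, ⟨Nat.cast_nonneg _, le_rfl⟩, P.param_nat _⟩

/-- Parameters with the same integer part belong to one nondegenerate segment, on which the
parametrization is injective. -/
lemma Proper.eq_of_floor_eq (hP : P.Proper) {s t : ℝ} (hs : s ∈ Set.Icc (0 : ℝ) P.len)
    (ht : t ∈ Set.Icc (0 : ℝ) P.len) (hf : ⌊s⌋₊ = ⌊t⌋₊) (h : P.param s = P.param t) : s = t := by
  rcases param_cases hs with rfl | ⟨i, hi, l, hl0, hl1, rfl⟩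
  · rw [Nat.floor_natCast] at hf
    exact le_antisymm (hf ▸ Nat.floor_le ht.1) ht.2
  · rw [floor_nat_add i hl0 hl1] at hf
    have h1 := Nat.floor_le ht.1
    have h2 := Nat.lt_floor_add_one t
    rw [← hf] at h1 h2
    have ht' : t = i + (t - i) := by ring
    rw [ht', param_nat_add _ _ hl0 hl1, param_nat_add _ _ (by linarith) (by linarith),
      add_right_inj] at h
    have := smul_left_injective ℝ (sub_ne_zero.2 (hP.1 i hi).symm) h
    rw [this]; ring

lemma simple_shift (hc : P.Cuttable c) (ho : P.Octilinear) (h : P.Simple) :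
    (P.shift c δ).Simple := by
  intro s hs t ht hst
  obtain ⟨s', hs', hsf, hs1⟩ := exists_uncut_param (δ := δ) hc hs
  obtain ⟨t', ht', htf, ht1⟩ := exists_uncut_param (δ := δ) hc ht
  have : s' = t' := h hs' ht' (by rw [← hs1, ← ht1, hst])
  exact (octilinear_shift hc ho).1.eq_of_floor_eq hs ht (by rw [← hsf, ← htf, this]) hst

end Polyline

/-! ### Drawings -/

lemma toR_injective : Function.Injective toR := by
  intro a b h
  simp only [toR, Prod.mk.injEq, Int.cast_inj] at h
  exact Prod.ext h.1 h.2

/-- The shift on the integer grid. -/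
noncomputable def gridShift (c : ℝ) (δ : ℕ) (p : ℤ × ℤ) : ℤ × ℤ :=
  if (p.1 : ℝ) < c then p else (p.1 + δ, p.2)

lemma toR_gridShift (c : ℝ) (δ : ℕ) (p : ℤ × ℤ) :
    toR (gridShift c δ p) = cutShift c δ (toR p) := by
  unfold gridShift cutShift
  by_cases h : (p.1 : ℝ) < c <;> simp [toR, h]

/-- The drawing obtained by shifting all vertex points and all polyline points. -/
noncomputable def OctiDrawing.shift {V : Type*} {G : SimpleGraph V} (D : OctiDrawing G) (c : ℝ)
    (δ : ℕ) (hc : ∀ e ∈ G.edgeSet, (D.poly e).Cuttable c) : OctiDrawing G where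
  pos v := gridShift c δ (D.pos v)
  inj u v h := by
    have h' := congrArg toR h
    simp only [toR_gridShift] at h'
    exact D.inj (toR_injective (cutShift_injective c δ h'))
  poly e := (D.poly e).shift c δ
  ends u v h := by
    have := congrArg (fun S => cutShift c δ '' S) (D.ends u v h)
    simpa [Set.image_pair, toR_gridShift, Polyline.shift] using this
  octi e he := Polyline.octilinear_shift (hc e he) (D.octi e he)

/-- **vertical cut.** Let `D` be a planar octilinear drawing of `G` and
`c : ℝ` such that no vertex point and no bend point has `x`-coordinate `c`, and every
segment whose image meets the vertical line `x = c` is horizontal. Then, for any positive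
integer `δ`, applying the cut-shift map to every vertex point and every polyline point
yields again a planar octilinear drawing of `G` in which every edge has the same number
of bends as in `D`. -/
theorem vertical_cut_stretch {V : Type*} {G : SimpleGraph V}
    (D : OctiDrawing G) (hD : D.IsPlanar) (c : ℝ)
    (hvert : ∀ v : V, ((D.pos v).1 : ℝ) ≠ c)
    (hpts : ∀ e ∈ G.edgeSet, ∀ i ≤ (D.poly e).len, ((D.poly e).pt i).1 ≠ c)
    (hhor : ∀ e ∈ G.edgeSet, ∀ i < (D.poly e).len,
      (∃ z ∈ segment ℝ ((D.poly e).pt i) ((D.poly e).pt (i + 1)), z.1 = c) →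
      ((D.poly e).pt i).2 = ((D.poly e).pt (i + 1)).2)
    (δ : ℕ) (hδ : 0 < δ) :
    ∃ D' : OctiDrawing G, D'.IsPlanar ∧
      (∀ v : V, toR (D'.pos v) = cutShift c δ (toR (D.pos v))) ∧
      (∀ e ∈ G.edgeSet, (D'.poly e).len = (D.poly e).len ∧ (D'.poly e).bends = (D.poly e).bends ∧
        ∀ i ≤ (D.poly e).len, (D'.poly e).pt i = cutShift c δ ((D.poly e).pt i)) := by
  have hc : ∀ e ∈ G.edgeSet, (D.poly e).Cuttable c := fun e he i hi =>
    ⟨hpts e he i hi.le, hpts e he (i + 1) hi,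
      fun h => hhor e he i hi (exists_mem_segment_fst_eq h)⟩
  -- A point that collapses to a vertex point is the shifted vertex point.
  have hback : ∀ (z : ℝ × ℝ) (w : V), uncut c δ z = toR (D.pos w) →
      z = toR ((D.shift c δ hc).pos w) := by
    intro z w h
    have hne : (uncut c δ z).1 ≠ c := by rw [h]; exact hvert w
    rw [← cutShift_uncut c δ z hne, h]
    exact (toR_gridShift c δ _).symm
  refine ⟨D.shift c δ hc, ⟨?_, ?_, ?_⟩, fun v => toR_gridShift c δ _,
    fun e _ => ⟨rfl, rfl, fun _ _ => rfl⟩⟩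
  · exact fun e he => Polyline.simple_shift (hc e he) (D.octi e he) (hD.1 e he)
  · intro u v huv
    apply Set.Subset.antisymm
    · rintro z ⟨hz, w, rfl⟩
      have hu : uncut c δ (toR ((D.shift c δ hc).pos w)) = toR (D.pos w) := by
        rw [show toR ((D.shift c δ hc).pos w) = _ from toR_gridShift c δ _]
        exact uncut_cutShift c δ _ (hvert w)
      have hmem : toR (D.pos w) ∈ (D.poly s(u, v)).image :=
        hu ▸ Polyline.uncut_mem_image (hc _ huv) hz
      have hw : toR (D.pos w) ∈ ({toR (D.pos u), toR (D.pos v)} : Set (ℝ × ℝ)) :=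
        hD.2.1 u v huv ▸ ⟨hmem, w, rfl⟩
      rcases hw with hw | hw
      · exact Or.inl (hback _ u (hu.trans hw))
      · exact Or.inr (hback _ v (hu.trans hw))
    · intro z hz
      refine ⟨?_, ?_⟩
      · rw [← (D.shift c δ hc).ends u v huv] at hz
        rcases hz with rfl | rfl
        · exact Polyline.pt_zero_mem_image _
        · exact Polyline.pt_len_mem_image _
      · rcases hz with rfl | rfl
        · exact ⟨u, rfl⟩
        · exact ⟨v, rfl⟩
  · rintro e he e' he' hne z ⟨hz, hz'⟩
    obtain ⟨w, hw, hwz⟩ := hD.2.2 e he e' he' hne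
      ⟨Polyline.uncut_mem_image (hc e he) hz, Polyline.uncut_mem_image (hc e' he') hz'⟩
    exact ⟨w, hw, (hback z w hwz.symm).symm⟩
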